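/- Let $f_1,\dots,f_n$ be real-valued functions on $\mathbb R^2$ that are real analytic and not identically zero near the origin, let $\gamma_1,\dots,\gamma_n\in\mathbb R$, and let $E\subset\mathbb R^2$ be either a disk $\{x^2+y^2<r_0^2\}$ or a finite disjoint union of regions $E_i$, where each $E_i$ is one of the regions into which the disk $\{x^2+y^2<r_0^2\}$ is cut by two curves joining the origin to the circle $x^2+y^2=r_0^2$; each of these curves is half of a graph $y=h(|x|^{1/N})$ or $x=h(|y|^{1/N})$, followed from the origin until it first meets the circle, with $N$ a positive integer and $h$ real analytic, $h(0)=0$, and any two of all the curves involved meet only at the origin. Put $g=\chi_E\prod_{i=1}^n|f_i|^{\gamma_i}$ and assume that $g$ is integrable on a neighborhood of the origin. Let $v=(v_1,v_2)$ be a unit vector, $v^\perp=(v_2,-v_1)$ and $w=v^\perp$. Let $\varepsilon>0$, $d\in\{0,1\}$ be the ball exponents of $g$: there are $c_1,c_2,c_3>0$ with $$c_1r^{\varepsilon}|\ln r|^{d}\le\int_{x^2+y^2<r^2}g\,dx\,dy\le c_2r^{\varepsilon}|\ln r|^{d}\qquad(0<r<c_3).$$ Let $\delta_w>0$, $e_w\in\{0,1\}$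 be the strip exponents of $g$ in the direction $w$: there is $c_w>0$ such that for every $0<c<c_w$ there are $a_c,b_c>0$ with $$a_cr^{\delta_w}|\ln r|^{e_w}\le\int_{\{|(x,y)\cdot w|<r,\ |(x,y)\cdot w^\perp|<c\}}g\,dx\,dy\le b_cr^{\delta_w}|\ln r|^{e_w}\qquad(0<r<c).$$ Then there is $r_1>0$, depending only on $f_1,\dots,f_n$, $\gamma_1,\dots,\gamma_n$, $E$ and $v$, such that the following holds for every $0<r_B<r_1$, every wedge $B'=\{(s\cos\theta,s\sin\theta):0<s<r_B,\ \theta_1<\theta<\theta_2\}$ with $\theta_1<\theta_2\le\theta_1+2\pi$, and all constants $A$, $C$. Consider the complex-valued functions $\alpha$ that are $C^1$ on $\{0<x^2+y^2<r_B^2\}$, satisfy $|\alpha|\le A$ and $|\nabla\alpha(x,y)|\le A(x^2+y^2)^{-1/2}$ there, and for which, with $$I(t,u)=\int_{B'}\alpha(x,y)\,g(x,y)\,e^{i(tx+uy)}\,dx\,dy,$$ the estimate $$|I(t,u)|\le C\int_{B'}\bigl(1+|(t,u)\cdot v|\,|(x,y)|+|(t,u)\cdot v^\perp|\,|(x,y)\cdot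 v^\perp|\bigr)^{-1/2}g(x,y)\,dx\,dy$$ holds for all $(t,u)\in\mathbb R^2$. (a) For every $a>0$ there is a constant $C_a$, the same for all these $\alpha$, such that for all $(t,u)$ with $|(t,u)\cdot v|>a|(t,u)\cdot v^\perp|$ the quantity $|I(t,u)|$ is at most $C_a(2+|(t,u)|)^{-\varepsilon}(\ln(2+|(t,u)|))^{d}$ if $\varepsilon<1/2$, at most $C_a(2+|(t,u)|)^{-1/2}(\ln(2+|(t,u)|))^{d+1}$ if $\varepsilon=1/2$, and at most $C_a(2+|(t,u)|)^{-1/2}$ if $\varepsilon>1/2$. (b) There is a constant $D$, the same for all these $\alpha$, such that for all $(t,u)$ with $|(t,u)\cdot v|<|(t,u)\cdot v^\perp|$ the quantity $|I(t,u)|$ is at most $D(2+|(t,u)|)^{-\delta_w}(\ln(2+|(t,u)|))^{e_w}$ if $\delta_w<1/2$, at most $D(2+|(t,u)|)^{-1/2}(\ln(2+|(t,u)|))^{e_w+1}$ if $\delta_w=1/2$, and at most $D(2+|(t,u)|)^{-1/2}$ if $\delta_w>1/2$. -/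

import Mathlib

open MeasureTheory Set Filter
open scoped Topology

noncomputable section

/-- The Euclidean magnitude `|(x,y)| = √(x²+y²)` of a point of `ℝ²`. -/
def nrm2 (p : ℝ × ℝ) : ℝ := Real.sqrt (p.1 ^ 2 + p.2 ^ 2)

/-- The open Euclidean disk `{(x,y) : x²+y² < r²}` centered at the origin. -/
def disk2 (r : ℝ) : Set (ℝ × ℝ) := {p : ℝ × ℝ | p.1 ^ 2 + p.2 ^ 2 < r ^ 2}

/-- Dot product on `ℝ²`. -/
def dot2 (p q : ℝ × ℝ) : ℝ := p.1 * q.1 + p.2 * q.2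

/-- The perpendicular vector `v^⊥ = (v₂, −v₁)`. -/
def perp2 (v : ℝ × ℝ) : ℝ × ℝ := (v.2, -v.1)

/-- The function `g = χ_E · ∏ᵢ |fᵢ|^(γᵢ)`. -/
def stdFun (n : ℕ) (f : Fin n → ℝ × ℝ → ℝ) (γ : Fin n → ℝ) (E : Set (ℝ × ℝ)) :
    ℝ × ℝ → ℝ :=
  E.indicator fun p => ∏ i, |f i p| ^ (γ i)

/-- A boundary curve for the region `E`: half of a graph `y = h(|x|^{1/N})` or
`x = h(|y|^{1/N})` with `h` real analytic and `h 0 = 0`, followed from the origin until it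
first meets the circle of radius `r₀`. The sign `σ` says which half is taken, and `s₀` is
the value of `|x|` (resp. `|y|`) at the end point on the circle. -/
def IsPuiseuxArc (r₀ : ℝ) (C : Set (ℝ × ℝ)) : Prop :=
  ∃ (N : ℕ) (h : ℝ → ℝ) (s₀ σ : ℝ),
    0 < N ∧ 0 < s₀ ∧ (σ = 1 ∨ σ = -1) ∧
    AnalyticOnNhd ℝ h (Icc 0 (s₀ ^ ((N : ℝ)⁻¹))) ∧ h 0 = 0 ∧
    (∀ s ∈ Ico 0 s₀, s ^ 2 + h (s ^ ((N : ℝ)⁻¹)) ^ 2 < r₀ ^ 2) ∧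
    s₀ ^ 2 + h (s₀ ^ ((N : ℝ)⁻¹)) ^ 2 = r₀ ^ 2 ∧
    (C = (fun s : ℝ => (σ * s, h (s ^ ((N : ℝ)⁻¹)))) '' Icc 0 s₀ ∨
     C = (fun s : ℝ => (h (s ^ ((N : ℝ)⁻¹)), σ * s)) '' Icc 0 s₀)

/-- The admissible form of the set `E`: either a disk centered at the origin, or a finite
disjoint union of regions `Eᵢ`, where `Eᵢ` is one of the regions (connected components) into
which two boundary curves joining the origin to the circle of radius `r₀` cut the disk of
radius `r₀`, and all these boundary curves are pairwise disjoint except for the origin. -/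
def IsStdDomain (E : Set (ℝ × ℝ)) : Prop :=
  (∃ r₀ > (0 : ℝ), E = disk2 r₀) ∨
  (∃ r₀ > (0 : ℝ), ∃ (m : ℕ) (Es : Fin m → Set (ℝ × ℝ)) (Cs : Fin m → Fin 2 → Set (ℝ × ℝ)),
    E = (⋃ i, Es i) ∧
    (Pairwise fun i j => Disjoint (Es i) (Es j)) ∧
    (∀ i, ∃ p ∈ disk2 r₀ \ (Cs i 0 ∪ Cs i 1),
      Es i = connectedComponentIn (disk2 r₀ \ (Cs i 0 ∪ Cs i 1)) p) ∧
    (∀ i j, IsPuiseuxArc r₀ (Cs i j)) ∧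
    (Pairwise fun q q' : Fin m × Fin 2 => Cs q.1 q.2 ∩ Cs q'.1 q'.2 = {0}))

/-- The standard form: the `fᵢ` are real analytic and not identically zero near the origin,
`g = χ_E ∏ |fᵢ|^(γᵢ)` is integrable near the origin, and `E` is an admissible domain. -/
structure StandardForm (n : ℕ) (f : Fin n → ℝ × ℝ → ℝ) (γ : Fin n → ℝ)
    (E : Set (ℝ × ℝ)) : Prop where
  analytic : ∀ i, AnalyticAt ℝ (f i) 0
  nontriv : ∀ i, ¬ ∀ᶠ p in 𝓝 (0 : ℝ × ℝ), f i p = 0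
  integ : ∃ U ∈ 𝓝 (0 : ℝ × ℝ), IntegrableOn (stdFun n f γ E) U
  domain : IsStdDomain E

/-- `ε`, `d` are the ball exponents of `g`:
`c₁ r^ε |log r|^d ≤ ∫_{x²+y²<r²} g ≤ c₂ r^ε |log r|^d` for all small `r > 0`. -/
def BallBound (g : ℝ × ℝ → ℝ) (ε : ℝ) (d : ℕ) : Prop :=
  0 < ε ∧ d ≤ 1 ∧ ∃ c₁ > (0 : ℝ), ∃ c₂ > (0 : ℝ), ∃ c₃ > (0 : ℝ), ∀ r : ℝ, 0 < r → r < c₃ →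
    c₁ * r ^ ε * |Real.log r| ^ d ≤ (∫ p in disk2 r, g p) ∧
    (∫ p in disk2 r, g p) ≤ c₂ * r ^ ε * |Real.log r| ^ d

/-- The strip `{(x,y) : |(x,y)·w| < r, |(x,y)·w^⊥| < c}`. -/
def strip2 (w : ℝ × ℝ) (r c : ℝ) : Set (ℝ × ℝ) :=
  {p : ℝ × ℝ | |dot2 p w| < r ∧ |dot2 p (perp2 w)| < c}

/-- `δ`, `e` are the strip exponents of `g` in the direction `w`: for every small `c`, with
constants `a`, `b` that may depend on `c`,
`a r^δ |log r|^e ≤ ∫_{strip2 w r c} g ≤ b r^δ |log r|^e` for `0 < r < c`. -/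
def StripBound (g : ℝ × ℝ → ℝ) (w : ℝ × ℝ) (δ : ℝ) (e : ℕ) : Prop :=
  0 < δ ∧ e ≤ 1 ∧ ∃ cw > (0 : ℝ), ∀ c : ℝ, 0 < c → c < cw →
    ∃ a > (0 : ℝ), ∃ b > (0 : ℝ), ∀ r : ℝ, 0 < r → r < c →
      a * r ^ δ * |Real.log r| ^ e ≤ (∫ p in strip2 w r c, g p) ∧
      (∫ p in strip2 w r c, g p) ≤ b * r ^ δ * |Real.log r| ^ e

/-- The Euclidean length `|∇α|` of the gradient of `α` at `p`. -/
def gradNorm2 (α : ℝ × ℝ → ℂ) (p : ℝ × ℝ) : ℝ :=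
  Real.sqrt (‖fderiv ℝ α p (1, 0)‖ ^ 2 + ‖fderiv ℝ α p (0, 1)‖ ^ 2)

/-- On the disk of radius `ρ` without its center, `α` is `C¹`, `|α| ≤ A` and
`|∇α(x,y)| ≤ A (x²+y²)^{-1/2}`. -/
def AlphaBound (ρ : ℝ) (α : ℝ × ℝ → ℂ) (A : ℝ) : Prop :=
  ContDiffOn ℝ 1 α (disk2 ρ \ {0}) ∧
  ∀ p ∈ disk2 ρ \ {0}, ‖α p‖ ≤ A ∧ gradNorm2 α p ≤ A * (nrm2 p)⁻¹

/-- The oscillatory integral `∫_S α(x,y) g(x,y) e^{i(tx+uy)} dx dy`. -/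
def oscInt (α : ℝ × ℝ → ℂ) (g : ℝ × ℝ → ℝ) (S : Set (ℝ × ℝ)) (t u : ℝ) : ℂ :=
  ∫ p in S, α p * (g p : ℂ) * Complex.exp (Complex.I * ((t * p.1 + u * p.2 : ℝ) : ℂ))

/-- A wedge of radius `ρ` at the origin: a region bounded by two half-lines from the origin
and the circle of radius `ρ`. -/
def IsWedge (ρ : ℝ) (W : Set (ℝ × ℝ)) : Prop :=
  ∃ θ₁ θ₂ : ℝ, θ₁ < θ₂ ∧ θ₂ ≤ θ₁ + 2 * Real.pi ∧
    W = {p : ℝ × ℝ | ∃ s θ : ℝ, 0 < s ∧ s < ρ ∧ θ₁ < θ ∧ θ < θ₂ ∧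
      p = (s * Real.cos θ, s * Real.sin θ)}

/-- The estimate `|∫_B α g e^{i(tx+uy)}| ≤
C ∫_B (1 + |(t,u)·v| |(x,y)| + |(t,u)·v^⊥| |(x,y)·v^⊥|)^{-1/2} g` for all `(t,u)`. -/
def WedgeEstimate (α : ℝ × ℝ → ℂ) (g : ℝ × ℝ → ℝ) (B : Set (ℝ × ℝ)) (v : ℝ × ℝ)
    (C : ℝ) : Prop :=
  ∀ t u : ℝ, ‖oscInt α g B t u‖ ≤
    C * ∫ p in B,
      (1 + |dot2 (t, u) v| * nrm2 p +
        |dot2 (t, u) (perp2 v)| * |dot2 p (perp2 v)|) ^ (-(1 / 2 : ℝ)) * g p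

end

lemma weight_le_of_level_le {b N φ ω : ℝ} (hb : 0 < b) (hN : 0 < N)
    (hω : b * N * φ * ω ^ 2 ≤ 1) {J : ℕ} (h : 2 ^ J / N ≤ φ) :
    ω ≤ √2 / √b * (√2)⁻¹ ^ (J + 1) := by
  have h1 : b * 2 ^ J * ω ^ 2 ≤ 1 := by
    have : (2 : ℝ) ^ J ≤ N * φ := by
      rw [div_le_iff₀ hN] at h; linarith
    calc b * 2 ^ J * ω ^ 2 ≤ b * (N * φ) * ω ^ 2 := by gcongr
      _ ≤ 1 := by linarith
  have h2 : √b * √2 ^ J * ω ≤ 1 := by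
    refine (le_abs_self _).trans (abs_le_one_iff_mul_self_le_one.2 ?_)
    have e1 : √b * √b = b := Real.mul_self_sqrt hb.le
    have e2 : √2 ^ J * √2 ^ J = 2 ^ J := by
      rw [← mul_pow, Real.mul_self_sqrt (by norm_num)]
    calc _ = (√b * √b) * (√2 ^ J * √2 ^ J) * ω ^ 2 := by ring
      _ ≤ 1 := by rwa [e1, e2]
  have : √2 / √b * (√2)⁻¹ ^ (J + 1) = 1 / (√b * √2 ^ J) := by
    rw [inv_pow, pow_succ]
    field_simp
  rw [this, le_div_iff₀ (by positivity)]
  linarith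

/-- Dyadic majorant of a weight `ω ≤ min(1, (bNφ)^{-1/2})`. -/
lemma weight_le_dyadic {b N φ ω : ℝ} (hb : 0 < b) (hN : 0 < N)
    (hω1 : ω ≤ 1) (hω : b * N * φ * ω ^ 2 ≤ 1) (J : ℕ) :
    ω ≤ (1 + √2 / √b) * (∑ j ∈ Finset.range (J + 1),
      (√2)⁻¹ ^ j * (if φ < 2 ^ j / N then 1 else 0) + (√2)⁻¹ ^ J) := by
  have hB : 0 ≤ √2 / √b := by positivity
  have hnn : ∀ j ∈ Finset.range (J + 1),
      0 ≤ (√2)⁻¹ ^ j * (if φ < 2 ^ j / N then (1 : ℝ) else 0) :=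
    fun j _ => by split_ifs <;> positivity
  have hq : ∀ k : ℕ, 0 ≤ (√2)⁻¹ ^ k := fun k => by positivity
  have key : ∀ k x : ℝ, 0 ≤ k → k ≤ x → ω ≤ (1 + √2 / √b) * k → ω ≤ (1 + √2 / √b) * x :=
    fun k x _ h1 h2 => h2.trans (by gcongr)
  by_cases h : φ < 2 ^ J / N
  · have hex : ∃ j, φ < 2 ^ j / N := ⟨J, h⟩
    classical
    obtain ⟨j, hj, hmin⟩ : ∃ j, φ < 2 ^ j / N ∧ ∀ i < j, ¬ φ < 2 ^ i / N :=
      ⟨Nat.find hex, Nat.find_spec hex, fun i hi => Nat.find_min hex hi⟩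
    have hjJ : j ∈ Finset.range (J + 1) := by
      rw [Finset.mem_range]
      by_contra hlt
      exact hmin J (by omega) h
    refine key ((√2)⁻¹ ^ j) _ (hq j) ?_ ?_
    · have := Finset.single_le_sum hnn hjJ
      rw [if_pos hj, mul_one] at this
      linarith [hq J]
    · rcases j with _ | i
      · rw [pow_zero]; linarith
      · have := weight_le_of_level_le hb hN hω (not_lt.1 (hmin i (by omega)))
        linarith [hq (i + 1)]
  · refine key ((√2)⁻¹ ^ J) _ (hq J) ?_ ?_
    · linarith [Finset.sum_nonneg hnn]
    · have h1 := weight_le_of_level_le hb hN hω (not_lt.1 h)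
      have h2 : (√2)⁻¹ ^ (J + 1) ≤ (√2)⁻¹ ^ J :=
        pow_le_pow_of_le_one (by positivity)
          (inv_le_one_of_one_le₀ (Real.one_le_sqrt.2 (by norm_num))) (by omega)
      have h3 := mul_le_mul_of_nonneg_left h2 hB
      linarith [hq J]

lemma integral_weight_le_dyadic {X : Type*} [MeasurableSpace X] {ν : Measure X}
    {g φ ω : X → ℝ} (hg : Integrable g ν) (hg0 : ∀ x, 0 ≤ g x) (hφ : Measurable φ)
    {b N : ℝ} (hb : 0 < b) (hN : 0 < N) (hω0 : ∀ x, 0 ≤ ω x) (hω1 : ∀ x, ω x ≤ 1)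
    (hω : ∀ᵐ x ∂ν, b * N * φ x * ω x ^ 2 ≤ 1) (J : ℕ) :
    ∫ x, ω x * g x ∂ν ≤ (1 + √2 / √b) * (∑ j ∈ Finset.range (J + 1),
      (√2)⁻¹ ^ j * (∫ x in {x | φ x < 2 ^ j / N}, g x ∂ν) + (√2)⁻¹ ^ J * ∫ x, g x ∂ν) := by
  have hm : ∀ j : ℕ, MeasurableSet {x | φ x < 2 ^ j / N} := fun j =>
    measurableSet_lt hφ measurable_const
  have hi : ∀ j ∈ Finset.range (J + 1), Integrable
      (fun x => (√2)⁻¹ ^ j * {x | φ x < 2 ^ j / N}.indicator g x) ν :=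
    fun j _ => (hg.indicator (hm j)).const_mul _
  have hi2 : Integrable (fun x => (√2)⁻¹ ^ J * g x) ν := hg.const_mul _
  have hrhs : Integrable (fun x => (1 + √2 / √b) * (∑ j ∈ Finset.range (J + 1),
      (√2)⁻¹ ^ j * {x | φ x < 2 ^ j / N}.indicator g x + (√2)⁻¹ ^ J * g x)) ν :=
    ((integrable_finsetSum _ hi).add hi2).const_mul _
  calc ∫ x, ω x * g x ∂ν
      ≤ ∫ x, (1 + √2 / √b) * (∑ j ∈ Finset.range (J + 1),
      (√2)⁻¹ ^ j * {x | φ x < 2 ^ j / N}.indicator g x + (√2)⁻¹ ^ J * g x) ∂ν := by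
        refine integral_mono_of_nonneg (ae_of_all _ fun x => mul_nonneg (hω0 x) (hg0 x)) hrhs ?_
        filter_upwards [hω] with x hx
        refine (mul_le_mul_of_nonneg_right
          (weight_le_dyadic hb hN (hω1 x) hx J) (hg0 x)).trans (le_of_eq ?_)
        rw [mul_assoc, add_mul (∑ j ∈ _, _), Finset.sum_mul]
        congr 2
        refine Finset.sum_congr rfl fun j _ => ?_
        by_cases h : φ x < 2 ^ j / N <;> simp [h, Set.indicator]
    _ = _ := by
        rw [integral_const_mul, integral_add (integrable_finsetSum _ hi) hi2,
          integral_finsetSum _ hi, integral_const_mul]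
        congr 2
        refine Finset.sum_congr rfl fun j _ => ?_
        rw [integral_const_mul, integral_indicator (hm j)]

lemma inv_sqrt_two_pow_le {c N : ℝ} (hc : 0 < c) (hN : 0 < N) {J : ℕ}
    (h : c * N < 2 ^ (J + 1)) : (√2)⁻¹ ^ J ≤ √(2 / c) * N ^ (-(1 / 2 : ℝ)) := by
  have e : (√2)⁻¹ ^ J = √((2 ^ J)⁻¹) := by
    rw [Real.sqrt_inv, inv_pow, Real.sqrt_eq_rpow, Real.sqrt_eq_rpow, ← Real.rpow_natCast,
      ← Real.rpow_natCast, ← Real.rpow_mul (by norm_num), ← Real.rpow_mul (by norm_num), mul_comm]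
  rw [e, Real.rpow_neg hN.le, ← Real.sqrt_eq_rpow, ← Real.sqrt_inv, ← Real.sqrt_mul (by positivity)]
  refine Real.sqrt_le_sqrt ?_
  rw [← div_eq_mul_inv, div_div, inv_le_comm₀ (by positivity) (by positivity), inv_div,
    div_le_iff₀ (by norm_num)]
  rw [pow_succ] at h
  linarith

lemma inv_sqrt_two_pow_mul_level (s : ℝ) {N : ℝ} (hN : 0 < N) (j : ℕ) :
    (√2)⁻¹ ^ j * ((2 ^ j / N) ^ s) = N ^ (-s) * ((2 : ℝ) ^ (s - 1 / 2)) ^ j := by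
  have e1 : (√2)⁻¹ = (2 : ℝ) ^ (-(1 / 2) : ℝ) := by
    rw [Real.sqrt_eq_rpow, Real.rpow_neg (by norm_num)]
  rw [e1, Real.div_rpow (by positivity) hN.le, Real.rpow_neg hN.le, ← Real.rpow_natCast,
    ← Real.rpow_natCast, ← Real.rpow_natCast, ← Real.rpow_mul (by norm_num),
    ← Real.rpow_mul (by norm_num), ← Real.rpow_mul (by norm_num), div_eq_mul_inv (_ ^ _),
    ← mul_assoc, ← Real.rpow_add (by norm_num), mul_comm]
  ring_nf

lemma integral_weight_le_geom {X : Type*} [MeasurableSpace X] {ν : Measure X}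
    {g φ : X → ℝ} (hg : Integrable g ν) (hg0 : ∀ x, 0 ≤ g x) (hφ : Measurable φ)
    {b c : ℝ} (hb : 0 < b) (hc : 0 < c) (hc1 : c ≤ 1) (s : ℝ) :
    ∃ C > (0 : ℝ), ∀ N : ℝ, 2 ≤ N → ∀ ω : X → ℝ, (∀ x, 0 ≤ ω x) → (∀ x, ω x ≤ 1) →
      (∀ᵐ x ∂ν, b * N * φ x * ω x ^ 2 ≤ 1) → ∀ L : ℝ, 0 ≤ L →
      (∀ r : ℝ, N⁻¹ ≤ r → r < c → ∫ x in {x | φ x < r}, g x ∂ν ≤ L * r ^ s) →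
      ∃ J : ℕ, 2 ^ J ≤ N ∧ ∫ x, ω x * g x ∂ν ≤
        C * (L * N ^ (-s) * ∑ j ∈ Finset.range (J + 1), ((2 : ℝ) ^ (s - 1 / 2)) ^ j +
          N ^ (-(1 / 2 : ℝ))) := by
  set m := ∫ x, g x ∂ν with hm
  have hm0 : 0 ≤ m := integral_nonneg hg0
  set B := 1 + √2 / √b with hB
  have hB1 : 1 ≤ B := by have : 0 ≤ √2 / √b := by positivity
                         linarith
  refine ⟨B * (1 + √(2 / (c / 2)) * m), by positivity, ?_⟩
  intro N hN ω hω0 hω1 hω L hL hM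
  have hN0 : 0 < N := by linarith
  rcases lt_or_ge (c / 2 * N) 1 with hsm | hbig
  · refine ⟨0, by simp; linarith, ?_⟩
    have h1 : ∫ x, ω x * g x ∂ν ≤ m :=
      integral_mono_of_nonneg (ae_of_all _ fun x => mul_nonneg (hω0 x) (hg0 x)) hg
        (ae_of_all _ fun x => mul_le_of_le_one_left (hg0 x) (hω1 x))
    have h2 : 1 ≤ √(2 / (c / 2)) * N ^ (-(1 / 2 : ℝ)) := by
      have := inv_sqrt_two_pow_le (c := c / 2) (J := 0) (by positivity) hN0 (by linarith)
      simpa using this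
    have h3 : 0 ≤ L * N ^ (-s) * ∑ j ∈ Finset.range (0 + 1), ((2 : ℝ) ^ (s - 1 / 2)) ^ j := by
      positivity
    have h4 : 0 ≤ N ^ (-(1 / 2 : ℝ)) := by positivity
    calc ∫ x, ω x * g x ∂ν ≤ m * 1 := by linarith
      _ ≤ m * (√(2 / (c / 2)) * N ^ (-(1 / 2 : ℝ))) := by gcongr
      _ = 1 * (√(2 / (c / 2)) * m) * N ^ (-(1 / 2 : ℝ)) := by ring
      _ ≤ B * (1 + √(2 / (c / 2)) * m) * N ^ (-(1 / 2 : ℝ)) := by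
          gcongr
          linarith
      _ ≤ _ := by gcongr; linarith
  · obtain ⟨J, hJ1, hJ2⟩ := exists_nat_pow_near hbig (one_lt_two (α := ℝ))
    refine ⟨J, by nlinarith, ?_⟩
    refine (integral_weight_le_dyadic hg hg0 hφ hb hN0 hω0 hω1 hω J).trans ?_
    have h1 : ∑ j ∈ Finset.range (J + 1),
        (√2)⁻¹ ^ j * (∫ x in {x | φ x < 2 ^ j / N}, g x ∂ν) ≤
        L * N ^ (-s) * ∑ j ∈ Finset.range (J + 1), ((2 : ℝ) ^ (s - 1 / 2)) ^ j := by
      rw [Finset.mul_sum]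
      refine Finset.sum_le_sum fun j hj => ?_
      have hjJ : (2 : ℝ) ^ j ≤ 2 ^ J :=
        pow_le_pow_right₀ (by norm_num) (by have := Finset.mem_range.1 hj; omega)
      rw [mul_assoc L, ← inv_sqrt_two_pow_mul_level s hN0 j]
      calc _ ≤ (√2)⁻¹ ^ j * (L * (2 ^ j / N) ^ s) := by
            gcongr
            refine hM _ ?_ ?_
            · rw [← one_div]
              gcongr
              exact one_le_pow₀ (by norm_num)
            · rw [div_lt_iff₀ hN0]
              nlinarith
        _ = _ := by ring
    have h2 := inv_sqrt_two_pow_le (c := c / 2) (by positivity) hN0 hJ2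
    have h3 : 0 ≤ L * N ^ (-s) * ∑ j ∈ Finset.range (J + 1), ((2 : ℝ) ^ (s - 1 / 2)) ^ j := by
      positivity
    have h4 : 0 ≤ N ^ (-(1 / 2 : ℝ)) := by positivity
    rw [← hm, mul_assoc B]
    gcongr
    calc _ ≤ L * N ^ (-s) * ∑ j ∈ Finset.range (J + 1), ((2 : ℝ) ^ (s - 1 / 2)) ^ j +
          √(2 / (c / 2)) * N ^ (-(1 / 2 : ℝ)) * m := by gcongr
      _ ≤ _ := by
        have h5 : 0 ≤ √(2 / (c / 2)) * m := by positivity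
        nlinarith [mul_nonneg h5 h3]

lemma abs_log_le_log_of_inv_le {N r : ℝ} (hN : 1 ≤ N) (h1 : N⁻¹ ≤ r) (h2 : r ≤ 1) :
    |Real.log r| ≤ Real.log N := by
  have hr : 0 < r := lt_of_lt_of_le (by positivity) h1
  rw [abs_of_nonpos (Real.log_nonpos hr.le h2), ← Real.log_inv]
  exact Real.log_le_log (by positivity) ((inv_le_comm₀ (by linarith) hr).1 h1)

/-- Decay of `∫ ω g` for weights `ω ≤ min(1, (bNφ)^{-1/2})`, given the growth
`∫_{φ<r} g ≤ K r^s |log r|^d` of the sublevel integrals. -/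
lemma exists_weight_decay {X : Type*} [MeasurableSpace X] {ν : Measure X}
    {g φ : X → ℝ} (hg : Integrable g ν) (hg0 : ∀ x, 0 ≤ g x) (hφ : Measurable φ)
    {b c K s : ℝ} {d : ℕ} (hb : 0 < b) (hc : 0 < c) (hc1 : c ≤ 1) (hK : 0 ≤ K) (hd : d ≤ 1)
    (hM : ∀ r : ℝ, 0 < r → r < c →
      ∫ x in {x | φ x < r}, g x ∂ν ≤ K * r ^ s * |Real.log r| ^ d) :
    ∃ C > (0 : ℝ), ∀ N : ℝ, 2 ≤ N → ∀ ω : X → ℝ, (∀ x, 0 ≤ ω x) → (∀ x, ω x ≤ 1) →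
      (∀ᵐ x ∂ν, b * N * φ x * ω x ^ 2 ≤ 1) →
      (s < 1 / 2 → ∫ x, ω x * g x ∂ν ≤ C * N ^ (-s) * Real.log N ^ d) ∧
      (s = 1 / 2 → ∫ x, ω x * g x ∂ν ≤ C * N ^ (-(1 / 2 : ℝ)) * Real.log N ^ (d + 1)) ∧
      (1 / 2 < s → ∫ x, ω x * g x ∂ν ≤ C * N ^ (-(1 / 2 : ℝ))) := by
  have hl2 : 0 < Real.log 2 := Real.log_pos (by norm_num)
  have hML : ∀ N : ℝ, 2 ≤ N → ∀ r : ℝ, N⁻¹ ≤ r → r < c →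
      ∫ x in {x | φ x < r}, g x ∂ν ≤ (K * Real.log N ^ d) * r ^ s := by
    intro N hN r h1 h2
    have hr : 0 < r := lt_of_lt_of_le (by positivity) h1
    have := abs_log_le_log_of_inv_le (by linarith) h1 (h2.le.trans hc1)
    calc _ ≤ K * r ^ s * |Real.log r| ^ d := hM r hr h2
      _ ≤ K * r ^ s * Real.log N ^ d := by gcongr
      _ = _ := by ring
  have hlog : ∀ N : ℝ, 2 ≤ N → ∀ k : ℕ, 1 ≤ (Real.log 2)⁻¹ ^ k * Real.log N ^ k := by
    intro N hN k
    rw [← mul_pow]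
    refine one_le_pow₀ ?_
    rw [inv_mul_eq_div, one_le_div hl2]
    exact Real.log_le_log (by norm_num) hN
  rcases lt_trichotomy s (1 / 2) with hs | hs | hs
  · obtain ⟨C, hC, H⟩ := integral_weight_le_geom hg hg0 hφ hb hc hc1 s
    set ρ := (2 : ℝ) ^ (s - 1 / 2) with hρ
    have hρ0 : 0 ≤ ρ := by positivity
    have hρ1 : ρ < 1 := Real.rpow_lt_one_of_one_lt_of_neg (by norm_num) (by linarith)
    have hρ2 : 0 < (1 - ρ)⁻¹ := inv_pos.2 (by linarith)
    refine ⟨C * (K * (1 - ρ)⁻¹ + (Real.log 2)⁻¹ ^ d), by positivity, ?_⟩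
    intro N hN ω hω0 hω1 hω
    refine ⟨fun _ => ?_, fun h => absurd h hs.ne, fun h => absurd h hs.not_gt⟩
    have hlN : 0 ≤ Real.log N := Real.log_nonneg (by linarith)
    obtain ⟨J, -, hJ⟩ := H N hN ω hω0 hω1 hω _ (by positivity) (hML N hN)
    have h1 : ∑ j ∈ Finset.range (J + 1), ρ ^ j ≤ (1 - ρ)⁻¹ := by
      rw [← tsum_geometric_of_lt_one hρ0 hρ1]
      exact (summable_geometric_of_lt_one hρ0 hρ1).sum_le_tsum _ fun _ _ => by positivity
    have h2 : N ^ (-(1 / 2 : ℝ)) ≤ N ^ (-s) * ((Real.log 2)⁻¹ ^ d * Real.log N ^ d) :=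
      calc _ ≤ N ^ (-s) := Real.rpow_le_rpow_of_exponent_le (by linarith) (by linarith)
        _ ≤ _ := le_mul_of_one_le_right (by positivity) (hlog N hN d)
    calc _ ≤ _ := hJ
      _ ≤ C * (K * Real.log N ^ d * N ^ (-s) * (1 - ρ)⁻¹ +
          N ^ (-s) * ((Real.log 2)⁻¹ ^ d * Real.log N ^ d)) := by gcongr
      _ = _ := by ring
  · obtain ⟨C, hC, H⟩ := integral_weight_le_geom hg hg0 hφ hb hc hc1 s
    refine ⟨C * (K * (2 * (Real.log 2)⁻¹) + (Real.log 2)⁻¹ ^ (d + 1)), by positivity, ?_⟩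
    intro N hN ω hω0 hω1 hω
    refine ⟨fun h => absurd hs h.ne, fun _ => ?_, fun h => absurd hs h.ne'⟩
    have hlN : 0 ≤ Real.log N := Real.log_nonneg (by linarith)
    obtain ⟨J, hJN, hJ⟩ := H N hN ω hω0 hω1 hω _ (by positivity) (hML N hN)
    have h1 : ∑ j ∈ Finset.range (J + 1), ((2 : ℝ) ^ (s - 1 / 2)) ^ j ≤
        2 * (Real.log 2)⁻¹ * Real.log N := by
      have h3 := Real.log_le_log (by positivity) hJN
      rw [Real.log_pow] at h3
      have h4 := Real.log_le_log (by norm_num) hN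
      simp only [hs, sub_self, Real.rpow_zero, one_pow, Finset.sum_const, Finset.card_range,
        nsmul_eq_mul, mul_one]
      push_cast
      rw [mul_assoc, inv_mul_eq_div, mul_div_assoc', le_div_iff₀ hl2]
      linarith
    have h2 : N ^ (-(1 / 2 : ℝ)) ≤
        N ^ (-(1 / 2 : ℝ)) * ((Real.log 2)⁻¹ ^ (d + 1) * Real.log N ^ (d + 1)) :=
      le_mul_of_one_le_right (by positivity) (hlog N hN _)
    calc _ ≤ _ := hJ
      _ ≤ C * (K * Real.log N ^ d * N ^ (-s) * (2 * (Real.log 2)⁻¹ * Real.log N) +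
          N ^ (-(1 / 2 : ℝ)) * ((Real.log 2)⁻¹ ^ (d + 1) * Real.log N ^ (d + 1))) := by gcongr
      _ = _ := by rw [hs]; ring
  · set s' := (s + 1 / 2) / 2 with hs'
    have hs1 : 1 / 2 < s' := by rw [hs']; linarith
    have hs2 : 0 < s - s' := by rw [hs']; linarith
    obtain ⟨C, hC, H⟩ := integral_weight_le_geom hg hg0 hφ hb hc hc1 s'
    set ρ := (2 : ℝ) ^ (s' - 1 / 2) with hρ
    have hρ1 : 1 < ρ := Real.one_lt_rpow (by norm_num) (by linarith)
    have hρ2 : 0 < ρ - 1 := by linarith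
    set L := K * (1 + 1 / (s - s')) with hL
    have hL0 : 0 ≤ L := by positivity
    have hML' : ∀ r : ℝ, 0 < r → r < c → ∫ x in {x | φ x < r}, g x ∂ν ≤ L * r ^ s' := by
      intro r hr hrc
      have e : r ^ s = r ^ (s - s') * r ^ s' := by
        rw [← Real.rpow_add hr]; ring_nf
      have h0 : r ^ (s - s') ≤ 1 := Real.rpow_le_one hr.le (hrc.le.trans hc1) hs2.le
      have h1 : r ^ (s - s') * |Real.log r| ^ d ≤ 1 + 1 / (s - s') := by
        have h2 : 0 < 1 / (s - s') := by positivity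
        interval_cases d
        · rw [pow_zero]; linarith
        · have := Real.abs_log_mul_self_rpow_lt r (s - s') hr (hrc.le.trans hc1) hs2
          rw [abs_mul, abs_of_nonneg (a := r ^ (s - s')) (by positivity)] at this
          rw [pow_one]; linarith
      calc _ ≤ K * r ^ s * |Real.log r| ^ d := hM r hr hrc
        _ = K * (r ^ (s - s') * |Real.log r| ^ d) * r ^ s' := by rw [e]; ring
        _ ≤ _ := by rw [hL]; gcongr
    refine ⟨C * (L * (ρ / (ρ - 1)) + 1), by positivity, ?_⟩
    intro N hN ω hω0 hω1 hω
    refine ⟨fun h => absurd h hs.not_gt, fun h => absurd h hs.ne', fun _ => ?_⟩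
    obtain ⟨J, hJN, hJ⟩ := H N hN ω hω0 hω1 hω L hL0
      fun r h1 h2 => hML' r (lt_of_lt_of_le (by positivity) h1) h2
    have hJ' : ρ ^ J ≤ N ^ (s' - 1 / 2) := by
      rw [hρ, ← Real.rpow_natCast, ← Real.rpow_mul (by norm_num), mul_comm,
        Real.rpow_mul (by norm_num), Real.rpow_natCast]
      exact Real.rpow_le_rpow (by positivity) hJN (by linarith)
    have h1 : ∑ j ∈ Finset.range (J + 1), ρ ^ j ≤ ρ / (ρ - 1) * N ^ (s' - 1 / 2) := by
      rw [geom_sum_eq hρ1.ne', div_mul_eq_mul_div]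
      gcongr
      rw [pow_succ]
      nlinarith
    calc _ ≤ _ := hJ
      _ ≤ C * (L * N ^ (-s') * (ρ / (ρ - 1) * N ^ (s' - 1 / 2)) + N ^ (-(1 / 2 : ℝ))) := by
          gcongr
      _ = C * (L * (ρ / (ρ - 1)) * (N ^ (-s') * N ^ (s' - 1 / 2)) + N ^ (-(1 / 2 : ℝ))) := by
          ring
      _ = C * (L * (ρ / (ρ - 1)) + 1) * N ^ (-(1 / 2 : ℝ)) := by
          rw [← Real.rpow_add (by linarith)]; ring_nf

lemma stdFun_nonneg (n : ℕ) (f : Fin n → ℝ × ℝ → ℝ) (γ : Fin n → ℝ) (E : Set (ℝ × ℝ))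
    (p : ℝ × ℝ) : 0 ≤ stdFun n f γ E p :=
  Set.indicator_nonneg (fun _ _ => Finset.prod_nonneg fun _ _ => by positivity) p

lemma nrm2_nonneg (p : ℝ × ℝ) : 0 ≤ nrm2 p := Real.sqrt_nonneg _

lemma nrm2_lt_iff {p : ℝ × ℝ} {r : ℝ} (hr : 0 < r) : nrm2 p < r ↔ p ∈ disk2 r :=
  Real.sqrt_lt' hr

lemma measurable_nrm2 : Measurable nrm2 := by unfold nrm2; fun_prop

lemma measurable_abs_dot2 (w : ℝ × ℝ) : Measurable fun p => |dot2 p w| := by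
  unfold dot2
  exact (Continuous.abs (by fun_prop)).measurable

lemma measurableSet_disk2 (r : ℝ) : MeasurableSet (disk2 r) :=
  measurableSet_lt (by fun_prop) measurable_const

lemma IsWedge.subset_disk2 {ρ : ℝ} {W : Set (ℝ × ℝ)} (hW : IsWedge ρ W) : W ⊆ disk2 ρ := by
  obtain ⟨θ₁, θ₂, -, -, rfl⟩ := hW
  rintro p ⟨s, θ, hs, hsρ, -, -, rfl⟩
  have : (s * Real.cos θ) ^ 2 + (s * Real.sin θ) ^ 2 = s ^ 2 := by
    linear_combination s ^ 2 * Real.cos_sq_add_sin_sq θ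
  change (s * Real.cos θ) ^ 2 + (s * Real.sin θ) ^ 2 < ρ ^ 2
  rw [this]
  exact pow_lt_pow_left₀ hsρ hs.le (by norm_num)

lemma exists_disk2_subset {U : Set (ℝ × ℝ)} (hU : U ∈ 𝓝 (0 : ℝ × ℝ)) :
    ∃ ρ > (0 : ℝ), disk2 ρ ⊆ U := by
  obtain ⟨ρ, hρ, h⟩ := Metric.mem_nhds_iff.1 hU
  refine ⟨ρ, hρ, fun p hp => h ?_⟩
  change p.1 ^ 2 + p.2 ^ 2 < ρ ^ 2 at hp
  rw [mem_ball_zero_iff, Prod.norm_def, max_lt_iff, Real.norm_eq_abs, Real.norm_eq_abs]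
  exact ⟨abs_lt_of_sq_lt_sq (by nlinarith) hρ.le, abs_lt_of_sq_lt_sq (by nlinarith) hρ.le⟩

lemma disk2_subset_disk2 {r ρ : ℝ} (hr : 0 ≤ r) (h : r ≤ ρ) : disk2 r ⊆ disk2 ρ :=
  fun p (hp : p.1 ^ 2 + p.2 ^ 2 < r ^ 2) => hp.trans_le (pow_le_pow_left₀ hr h 2)

lemma sq_add_sq_eq_one_of_nrm2 {v : ℝ × ℝ} (hv : nrm2 v = 1) : v.1 ^ 2 + v.2 ^ 2 = 1 :=
  Real.sqrt_eq_one.1 hv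

lemma dot2_sq_add_dot2_perp2_sq {v : ℝ × ℝ} (hv : nrm2 v = 1) (p : ℝ × ℝ) :
    dot2 p v ^ 2 + dot2 p (perp2 v) ^ 2 = p.1 ^ 2 + p.2 ^ 2 := by
  have := sq_add_sq_eq_one_of_nrm2 hv
  simp only [dot2, perp2]
  linear_combination (p.1 ^ 2 + p.2 ^ 2) * this

lemma nrm2_perp2 (v : ℝ × ℝ) : nrm2 (perp2 v) = nrm2 v := by
  simp only [nrm2, perp2, neg_sq, add_comm]

lemma nrm2_le_abs_dot2_add {v : ℝ × ℝ} (hv : nrm2 v = 1) (p : ℝ × ℝ) :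
    nrm2 p ≤ |dot2 p v| + |dot2 p (perp2 v)| := by
  refine Real.sqrt_le_iff.2 ⟨by positivity, ?_⟩
  rw [← dot2_sq_add_dot2_perp2_sq hv, add_sq, sq_abs, sq_abs]
  have : 0 ≤ 2 * |dot2 p v| * |dot2 p (perp2 v)| := by positivity
  linarith

lemma abs_dot2_le_nrm2 {v : ℝ × ℝ} (hv : nrm2 v = 1) (p : ℝ × ℝ) : |dot2 p v| ≤ nrm2 p := by
  refine Real.abs_le_sqrt ?_
  rw [← dot2_sq_add_dot2_perp2_sq hv]
  exact le_add_of_nonneg_right (sq_nonneg _)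

lemma strip2_subset_disk2 {w : ℝ × ℝ} (hw : nrm2 w = 1) {r c : ℝ} (hc : 0 < c) (hr : r ≤ c) :
    strip2 w r c ⊆ disk2 (2 * c) := by
  intro p hp
  refine (nrm2_lt_iff (by linarith)).1 ((nrm2_le_abs_dot2_add hw p).trans_lt ?_)
  linarith [hp.1, hp.2]

/-- A wedge estimate whose weight dominates `bNφ`, `N = 2 + |(t,u)|`, turns
the growth of the sublevel integrals of `φ` into decay of the oscillatory integral. -/
lemma WedgeEstimate.exists_decay {g : ℝ × ℝ → ℝ} (hg0 : ∀ p, 0 ≤ g p) {B : Set (ℝ × ℝ)} {ρ : ℝ}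
    (hB : B ⊆ disk2 ρ) (hg : IntegrableOn g B) {φ : ℝ × ℝ → ℝ} (hφ : Measurable φ)
    {b c K s : ℝ} {d : ℕ} (hb : 0 < b) (hc : 0 < c) (hc1 : c ≤ 1) (hK : 0 ≤ K) (hd : d ≤ 1)
    (hM : ∀ r : ℝ, 0 < r → r < c →
      ∫ p in {p | φ p < r} ∩ B, g p ≤ K * r ^ s * |Real.log r| ^ d) (v : ℝ × ℝ) (C₀ : ℝ) :
    ∃ C > (0 : ℝ), ∀ α : ℝ × ℝ → ℂ, WedgeEstimate α g B v C₀ → ∀ t u : ℝ,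
      (∀ p ∈ disk2 ρ, b * (2 + nrm2 (t, u)) * φ p ≤ 1 + |dot2 (t, u) v| * nrm2 p +
        |dot2 (t, u) (perp2 v)| * |dot2 p (perp2 v)|) →
      (s < 1 / 2 → ‖oscInt α g B t u‖ ≤
        C * (2 + nrm2 (t, u)) ^ (-s) * Real.log (2 + nrm2 (t, u)) ^ d) ∧
      (s = 1 / 2 → ‖oscInt α g B t u‖ ≤
        C * (2 + nrm2 (t, u)) ^ (-(1 / 2 : ℝ)) * Real.log (2 + nrm2 (t, u)) ^ (d + 1)) ∧
      (1 / 2 < s → ‖oscInt α g B t u‖ ≤ C * (2 + nrm2 (t, u)) ^ (-(1 / 2 : ℝ))) := by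
  obtain ⟨C, hC, H⟩ := exists_weight_decay (ν := volume.restrict B) hg hg0 hφ hb hc hc1 hK hd
    (fun r hr hrc => by
      rw [Measure.restrict_restrict (measurableSet_lt hφ measurable_const)]
      exact hM r hr hrc)
  refine ⟨(|C₀| + 1) * C, by positivity, fun α hα t u hdom => ?_⟩
  set Φ : ℝ × ℝ → ℝ := fun p => 1 + |dot2 (t, u) v| * nrm2 p +
    |dot2 (t, u) (perp2 v)| * |dot2 p (perp2 v)| with hΦ
  have hΦ1 : ∀ p, 1 ≤ Φ p := fun p => by
    have h1 := mul_nonneg (abs_nonneg (dot2 (t, u) v)) (nrm2_nonneg p)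
    have h2 := mul_nonneg (abs_nonneg (dot2 (t, u) (perp2 v))) (abs_nonneg (dot2 p (perp2 v)))
    simp only [hΦ]
    linarith
  have hω0 : ∀ p, 0 ≤ Φ p ^ (-(1 / 2 : ℝ)) := fun p =>
    Real.rpow_nonneg (by linarith [hΦ1 p]) _
  have hae : ∀ᵐ p ∂volume.restrict B, p ∈ disk2 ρ :=
    ae_mono (Measure.restrict_mono hB le_rfl) (ae_restrict_mem (measurableSet_disk2 ρ))
  have key := H (2 + nrm2 (t, u)) (by linarith [nrm2_nonneg (t, u)])
    (fun p => Φ p ^ (-(1 / 2 : ℝ))) hω0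
    (fun p => Real.rpow_le_one_of_one_le_of_nonpos (hΦ1 p) (by norm_num)) (by
      filter_upwards [hae] with p hp
      have hpos : 0 < Φ p := by linarith [hΦ1 p]
      rw [← Real.rpow_natCast, ← Real.rpow_mul hpos.le]
      norm_num
      rw [Real.rpow_neg_one, ← div_eq_mul_inv, div_le_one hpos]
      exact hdom p hp)
  have hI : ‖oscInt α g B t u‖ ≤ (|C₀| + 1) * ∫ p in B, Φ p ^ (-(1 / 2 : ℝ)) * g p := by
    refine (hα t u).trans (mul_le_mul_of_nonneg_right ?_
      (integral_nonneg fun p => mul_nonneg (hω0 p) (hg0 p)))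
    linarith [le_abs_self C₀]
  refine ⟨fun h => ?_, fun h => ?_, fun h => ?_⟩
  · exact hI.trans ((mul_le_mul_of_nonneg_left (key.1 h) (by positivity)).trans_eq (by ring))
  · exact hI.trans ((mul_le_mul_of_nonneg_left (key.2.1 h) (by positivity)).trans_eq (by ring))
  · exact hI.trans ((mul_le_mul_of_nonneg_left (key.2.2 h) (by positivity)).trans_eq (by ring))

/-- The threshold `r₁` makes precise that the wedge lies in a small disk; the constants `Ca`
and `D` do not depend on `α` except through `A` and `C₀`. -/
theorem wedge_decay_estimates {n : ℕ} (f : Fin n → ℝ × ℝ → ℝ) (γ : Fin n → ℝ)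
    (E : Set (ℝ × ℝ)) (hsf : StandardForm n f γ E)
    (v : ℝ × ℝ) (hv : nrm2 v = 1)
    (ε : ℝ) (d : ℕ) (hball : BallBound (stdFun n f γ E) ε d)
    (δw : ℝ) (ew : ℕ) (hstrip : StripBound (stdFun n f γ E) (perp2 v) δw ew) :
    ∃ r₁ > (0 : ℝ), ∀ rB : ℝ, 0 < rB → rB < r₁ → ∀ B' : Set (ℝ × ℝ), IsWedge rB B' →
      ∀ A C₀ : ℝ,
        (∀ a > (0 : ℝ), ∃ Ca > (0 : ℝ), ∀ α : ℝ × ℝ → ℂ, AlphaBound rB α A →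
          WedgeEstimate α (stdFun n f γ E) B' v C₀ →
          ∀ t u : ℝ, a * |dot2 (t, u) (perp2 v)| < |dot2 (t, u) v| →
            (ε < 1 / 2 →
              ‖oscInt α (stdFun n f γ E) B' t u‖ ≤
                Ca * (2 + nrm2 (t, u)) ^ (-ε) * (Real.log (2 + nrm2 (t, u))) ^ d) ∧
            (ε = 1 / 2 →
              ‖oscInt α (stdFun n f γ E) B' t u‖ ≤
                Ca * (2 + nrm2 (t, u)) ^ (-(1 / 2 : ℝ)) *
                  (Real.log (2 + nrm2 (t, u))) ^ (d + 1)) ∧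
            (1 / 2 < ε →
              ‖oscInt α (stdFun n f γ E) B' t u‖ ≤
                Ca * (2 + nrm2 (t, u)) ^ (-(1 / 2 : ℝ)))) ∧
        (∃ D > (0 : ℝ), ∀ α : ℝ × ℝ → ℂ, AlphaBound rB α A →
          WedgeEstimate α (stdFun n f γ E) B' v C₀ →
          ∀ t u : ℝ, |dot2 (t, u) v| < |dot2 (t, u) (perp2 v)| →
            (δw < 1 / 2 →
              ‖oscInt α (stdFun n f γ E) B' t u‖ ≤
                D * (2 + nrm2 (t, u)) ^ (-δw) * (Real.log (2 + nrm2 (t, u))) ^ ew) ∧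
            (δw = 1 / 2 →
              ‖oscInt α (stdFun n f γ E) B' t u‖ ≤
                D * (2 + nrm2 (t, u)) ^ (-(1 / 2 : ℝ)) *
                  (Real.log (2 + nrm2 (t, u))) ^ (ew + 1)) ∧
            (1 / 2 < δw →
              ‖oscInt α (stdFun n f γ E) B' t u‖ ≤
                D * (2 + nrm2 (t, u)) ^ (-(1 / 2 : ℝ)))) := by
  obtain ⟨U, hU, hgU⟩ := hsf.integ
  obtain ⟨ρ, hρ, hρU⟩ := exists_disk2_subset hU
  have hgρ : IntegrableOn (stdFun n f γ E) (disk2 ρ) := hgU.mono_set hρU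
  have hg0 := stdFun_nonneg n f γ E
  have hw : nrm2 (perp2 v) = 1 := (nrm2_perp2 v).trans hv
  obtain ⟨-, hd, _, _, c₂, hc₂, c₃, hc₃, hb⟩ := hball
  obtain ⟨-, he, cw, hcw, hst⟩ := hstrip
  obtain ⟨c, hc0, hc1, hcw', hcρ⟩ : ∃ c : ℝ, 0 < c ∧ c ≤ 1 ∧ c < cw ∧ 2 * c ≤ ρ :=
    ⟨min 1 (min (cw / 2) (ρ / 2)), by positivity, min_le_left _ _,
      by linarith [(min_le_right 1 (min (cw / 2) (ρ / 2))).trans (min_le_left _ _)],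
      by linarith [(min_le_right 1 (min (cw / 2) (ρ / 2))).trans (min_le_right _ _)]⟩
  refine ⟨c, hc0, fun rB hrB hrBc B' hB' A C₀ => ?_⟩
  have hBd : B' ⊆ disk2 rB := hB'.subset_disk2
  have hgB : IntegrableOn (stdFun n f γ E) B' :=
    hgρ.mono_set (hBd.trans (disk2_subset_disk2 hrB.le (by linarith)))
  have hp1 : ∀ p ∈ disk2 rB, nrm2 p < c := fun p hp => ((nrm2_lt_iff hrB).2 hp).trans hrBc
  constructor
  · intro a ha
    have hM : ∀ r : ℝ, 0 < r → r < min c₃ c → ∫ p in {p | nrm2 p < r} ∩ B', stdFun n f γ E p ≤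
        c₂ * r ^ ε * |Real.log r| ^ d := by
      intro r hr hrc
      obtain ⟨hr1, hr2⟩ := lt_min_iff.1 hrc
      refine le_trans (setIntegral_mono_set (hgρ.mono_set
        (disk2_subset_disk2 hr.le (by linarith))) (ae_of_all _ hg0)
        (LE.le.eventuallyLE ?_)) (hb r hr hr1).2
      exact fun p hp => (nrm2_lt_iff hr).1 hp.1
    obtain ⟨C, hC, H⟩ := WedgeEstimate.exists_decay hg0 hBd hgB measurable_nrm2
      (b := (2 * (1 + a⁻¹))⁻¹) (by positivity) (lt_min hc₃ hc0) ((min_le_right _ _).trans hc1)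
      hc₂.le hd hM v C₀
    refine ⟨C, hC, fun α _ hα t u htu => H α hα t u fun p hp => ?_⟩
    have h1 := nrm2_le_abs_dot2_add hv (t, u)
    have h2 : |dot2 (t, u) (perp2 v)| ≤ a⁻¹ * |dot2 (t, u) v| := by
      rw [inv_mul_eq_div, le_div_iff₀ ha]; linarith
    have h3 : nrm2 p ≤ 1 := (hp1 p hp).le.trans hc1
    have h4 := nrm2_nonneg p
    have h5 : 0 ≤ |dot2 (t, u) (perp2 v)| * |dot2 p (perp2 v)| := by positivity
    have h6 : 0 < a⁻¹ := inv_pos.2 ha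
    have h7 : 0 ≤ |dot2 (t, u) v| := abs_nonneg _
    have h8 : (2 * (1 + a⁻¹))⁻¹ * (2 + nrm2 (t, u)) ≤ 1 + |dot2 (t, u) v| := by
      rw [inv_mul_eq_div, div_le_iff₀ (by positivity)]
      nlinarith [mul_nonneg h6.le h7]
    have h9 := mul_le_mul_of_nonneg_right h8 h4
    linarith
  · obtain ⟨_, _, b', hb', hstc⟩ := hst c hc0 hcw'
    have hM : ∀ r : ℝ, 0 < r → r < c → ∫ p in {p | |dot2 p (perp2 v)| < r} ∩ B',
        stdFun n f γ E p ≤ b' * r ^ δw * |Real.log r| ^ ew := by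
      intro r hr hrc
      refine le_trans (setIntegral_mono_set (hgρ.mono_set
        ((strip2_subset_disk2 hw hc0 hrc.le).trans (disk2_subset_disk2 (by linarith) hcρ)))
        (ae_of_all _ hg0) (LE.le.eventuallyLE ?_)) (hstc r hr hrc).2
      exact fun p hp => ⟨hp.1, (abs_dot2_le_nrm2 ((nrm2_perp2 _).trans hw) p).trans_lt
        (hp1 p (hBd hp.2))⟩
    obtain ⟨D, hD, H⟩ := WedgeEstimate.exists_decay hg0 hBd hgB (measurable_abs_dot2 (perp2 v))
      (b := 1 / 2) (by norm_num) hc0 hc1 hb'.le he hM v C₀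
    refine ⟨D, hD, fun α _ hα t u htu => H α hα t u fun p hp => ?_⟩
    have h1 := nrm2_le_abs_dot2_add hv (t, u)
    have h2 : |dot2 p (perp2 v)| ≤ 1 :=
      (abs_dot2_le_nrm2 hw p).trans ((hp1 p hp).le.trans hc1)
    have h3 : 0 ≤ |dot2 (t, u) v| * nrm2 p := mul_nonneg (abs_nonneg _) (nrm2_nonneg p)
    have h4 : 1 / 2 * (2 + nrm2 (t, u)) ≤ 1 + |dot2 (t, u) (perp2 v)| := by linarith
    have h5 := mul_le_mul_of_nonneg_right h4 (abs_nonneg (dot2 p (perp2 v)))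
    linarith
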